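/- Let φ : ℕ → ℕ₀ be a function with φ(d) ≤ d for all d ∈ ℕ, and suppose that for some α ∈ [0,1) one has φ(d) ∈ o(d^{1−α}) as d → ∞ (i.e. φ(d)/d^{1−α} → 0). Then liminf_{d→∞} d · q_L(α,d,φ(d)) ≥ 1/8. -/

import Mathlib

open MeasureTheory Filter ENNReal

/-- Sites of `ℤ^{d+1}`. -/
abbrev Site (d : ℕ) := Fin (d + 1) → ℤ

/-- Site-percolation configurations on `ℤ^{d+1}`: a site is open iff its value is `true`. -/
abbrev Config (d : ℕ) := Site d → Bool

/-- `P` is the i.i.d. Bernoulli(`p`) product measure on `{0,1}^ι`: it is a probability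
measure whose cylinder events have the correct product probabilities. -/
def IsBernoulli {ι : Type*} (p : ℝ) (P : Measure (ι → Bool)) : Prop :=
  IsProbabilityMeasure P ∧
    ∀ (s : Finset ι) (f : ι → Bool),
      P {ω | ∀ x ∈ s, ω x = f x} =
        ∏ x ∈ s, (if f x then ENNReal.ofReal p else ENNReal.ofReal (1 - p))

/-- A function `F : ℤ^d → ℤ` is Lipschitz: `‖x − y‖₁ = 1 → |F x − F y| ≤ 1`. -/
def IsLipschitzFn {d : ℕ} (F : (Fin d → ℤ) → ℤ) : Prop :=
  ∀ x y : Fin d → ℤ, (∑ i, |x i - y i|) = 1 → |F x - F y| ≤ 1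

/-- Height `⌊α ∑ᵢ ηᵢ xᵢ⌋` of the tilted plane `L^{α,d}_η` above `x ∈ ℤ^d`. -/
noncomputable def planeHt (α : ℝ) {d : ℕ} (η x : Fin d → ℤ) : ℤ :=
  ⌊α * ∑ i, (η i : ℝ) * (x i : ℝ)⌋

/-- `η ∈ {-1,0,1}^d`. -/
def IsSign {d : ℕ} (η : Fin d → ℤ) : Prop := ∀ i, η i = -1 ∨ η i = 0 ∨ η i = 1

/-- The event `LIP^{α,d}_η` that there is an open Lipschitz surface lying (strictly) above
the tilted plane `L^{α,d}_η`. -/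
def LIP (α : ℝ) {d : ℕ} (η : Fin d → ℤ) : Set (Config d) :=
  {ω | ∃ F : (Fin d → ℤ) → ℤ, IsLipschitzFn F ∧
    ∀ x : Fin d → ℤ, ω (Fin.snoc x (F x)) = true ∧ planeHt α η x < F x}

/-- `pc` is the critical probability `p_L(α,d,η)` of Lipschitz percolation above the tilted
plane `L^{α,d}_η`: `pc ∈ (0,1)`, for `p` below it there is `P_p`-a.s. no open Lipschitz
surface above the plane, and for `p` above it there `P_p`-a.s. is one.
(Here `P p` is the Bernoulli(`p`) product measure on `{0,1}^{ℤ^{d+1}}`.) -/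
def IsCriticalProb {d : ℕ} (P : ℝ → Measure (Config d)) (α : ℝ) (η : Fin d → ℤ)
    (pc : ℝ) : Prop :=
  pc ∈ Set.Ioo (0 : ℝ) 1 ∧
    (∀ p, 0 ≤ p → p < pc → P p (LIP α η) = 0) ∧
    (∀ p, pc < p → p ≤ 1 → P p (LIP α η) = 1)

/-- The canonical direction vector `η ∈ {-1,0,1}^d` with `k` entries equal to `1`; the
critical probability `p_L(α,d,η)` depends on `η` only through `k = ‖η‖₁`, and
`p_L(α,d,k)` denotes the common value. -/
def etaK (d k : ℕ) : Fin d → ℤ := fun i => if (i : ℕ) < k then 1 else 0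


/-!
An admissible path steps up only onto closed sites and otherwise moves diagonally downwards. If the
sites that such paths reach from the tilted plane have bounded height above the origin, then the
sites just above the highest reachable ones form an open Lipschitz surface. Weight a path by `θ` to
the power of the height it gains over the plane. Then the total weight of its possible steps is at
most `q θ + 2 d / θ + 2 k θ ^ (α - 1)`, and if this is less than `1` the heights are almost surely
bounded, by Borel–Cantelli. For `q = c / d` and `θ = 4 d` it tends to `4 c + 1 / 2` when
`k = o(d ^ (1 - α))`, which is less than `1` for every `c < 1 / 8`.

The real-valued `liminf` also requires `d * q_L` to be bounded. For this, consider closed oriented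
paths with steps in the `d - k` flat directions and one step downwards: no open Lipschitz surface
can pass below the start of such a path that ends below the plane. By the second moment method they
exist with probability bounded below, uniformly in the height of the start, once `q * (d - k + 1)`
is at least `34`. The second moment is controlled by the expected number of meetings of two
independent oriented walks on `ℤ ^ D`, which is `O(1 / D)`.
-/
section Bernoulli

variable {ι κ : Type*} {q : ℝ} {P : Measure (ι → Bool)}

theorem IsBernoulli.measure_forall_closed (hP : IsBernoulli (1 - q) P) (hq : 0 ≤ q) (σ : κ ↪ ι)
    (s : Finset κ) : P {ω | ∀ x ∈ s, ω (σ x) = false} = ENNReal.ofReal (q ^ s.card) := by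
  have hcylinder := hP.2 (s.map σ) fun _ => false
  simpa [ENNReal.ofReal_pow hq] using hcylinder

theorem IsBernoulli.measureReal_forall_closed (hP : IsBernoulli (1 - q) P) (hq : 0 ≤ q)
    (σ : κ ↪ ι) (s : Finset κ) : P.real {ω | ∀ x ∈ s, ω (σ x) = false} = q ^ s.card := by
  rw [measureReal_def, hP.measure_forall_closed hq, ENNReal.toReal_ofReal (by positivity)]

theorem IsBernoulli.measureReal_forall_closed_inter [DecidableEq κ] (hP : IsBernoulli (1 - q) P)
    (hq : 0 ≤ q) (σ : κ ↪ ι) (s t : Finset κ) :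
    P.real ({ω | ∀ x ∈ s, ω (σ x) = false} ∩ {ω | ∀ x ∈ t, ω (σ x) = false}) =
      q ^ (s ∪ t).card := by
  simp only [← hP.measureReal_forall_closed hq σ, ← Set.ofPred_and, Finset.forall_mem_union]

theorem measurableSet_forall_closed (σ : κ → ι) (s : Finset κ) :
    MeasurableSet {ω : ι → Bool | ∀ x ∈ s, ω (σ x) = false} := by
  have hInter : {ω : ι → Bool | ∀ x ∈ s, ω (σ x) = false} =
      ⋂ x ∈ s, (fun ω : ι → Bool => ω (σ x)) ⁻¹' {false} := by ext; simp
  rw [hInter]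
  exact s.measurableSet_biInter fun x _ => measurable_pi_apply _ (measurableSet_singleton _)

end Bernoulli

/-- The identification of `ℤ^d × ℤ` with `ℤ^{d+1}` that makes the height the last coordinate. -/
def siteEmbedding (d : ℕ) : (Fin d → ℤ) × ℤ ↪ Site d where
  toFun z := Fin.snoc z.1 z.2
  inj' _ _ h := Prod.ext (Fin.snoc_injective2 h).1 (Fin.snoc_injective2 h).2

theorem exists_eq_add_single_of_sum_abs_sub_eq_one {ι : Type*} [Fintype ι] [DecidableEq ι]
    {x y : ι → ℤ} (h : ∑ i, |x i - y i| = 1) : ∃ (i : ι) (ε : ℤˣ), x = y + Pi.single i (ε : ℤ) := by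
  obtain ⟨i, -, hi⟩ := Finset.exists_ne_zero_of_sum_ne_zero (h.trans_ne one_ne_zero)
  have hsplit := Finset.add_sum_erase Finset.univ (fun j => |x j - y j|) (Finset.mem_univ i)
  have hrest : 0 ≤ ∑ j ∈ Finset.univ.erase i, |x j - y j| :=
    Finset.sum_nonneg fun _ _ => abs_nonneg _
  have hi_pos := abs_pos.2 (abs_ne_zero.1 hi)
  obtain ⟨ε, hε⟩ : IsUnit (x i - y i) := Int.isUnit_iff_abs_eq.2 (by omega)
  have hzero := (Finset.sum_eq_zero_iff_of_nonneg fun _ _ => abs_nonneg _).1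
    (show ∑ j ∈ Finset.univ.erase i, |x j - y j| = 0 by omega)
  refine ⟨i, ε, funext fun j => ?_⟩
  by_cases hj : j = i
  · subst hj
    simp [hε]
  · have := abs_eq_zero.1 (hzero j (by simp [hj]))
    simp [hj, sub_eq_zero.1 this]

section AdmissiblePaths

/-- The steps of an admissible path read backwards: `none` crosses a closed site downwards, and
`some (i, ε)` moves diagonally upwards in direction `ε eᵢ`. -/
abbrev BackStep (d : ℕ) := Option (Fin d × ℤˣ)

/-- The site of `ℤ^d × ℤ` reached from `z` by a backward step. -/
def backStep {d : ℕ} (z : (Fin d → ℤ) × ℤ) : BackStep d → (Fin d → ℤ) × ℤ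
  | none => (z.1, z.2 - 1)
  | some (i, ε) => (z.1 + Pi.single i (ε : ℤ), z.2 + 1)

/-- The backward path with steps `l` from `z` is an admissible path from the tilted plane to `z`:
it leaves downwards only closed sites, and it ends on the plane. -/
def Admissible {d : ℕ} (α : ℝ) (η : Fin d → ℤ) (ω : Config d) :
    (Fin d → ℤ) × ℤ → List (BackStep d) → Prop
  | z, [] => z.2 = planeHt α η z.1
  | z, s :: l => (s = none → ω (siteEmbedding d z) = false) ∧ Admissible α η ω (backStep z s) l

/-- The sites which the backward path with steps `l` from `z` leaves downwards. -/
def crossed {d : ℕ} : (Fin d → ℤ) × ℤ → List (BackStep d) → List ((Fin d → ℤ) × ℤ)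
  | _, [] => []
  | z, none :: l => z :: crossed (backStep z none) l
  | z, some a :: l => crossed (backStep z (some a)) l

/-- Some admissible path leads from the tilted plane to `z`. -/
def Reachable {d : ℕ} (α : ℝ) (η : Fin d → ℤ) (ω : Config d) (z : (Fin d → ℤ) × ℤ) : Prop :=
  ∃ l, Admissible α η ω z l

/-- The heights above `x ∈ ℤ^d` that admissible paths reach. -/
def reachableHeights {d : ℕ} (α : ℝ) (η : Fin d → ℤ) (ω : Config d) (x : Fin d → ℤ) : Set ℤ :=
  {g | Reachable α η ω (x, g)}

variable {d : ℕ} {α : ℝ} {η : Fin d → ℤ} {ω : Config d}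

theorem Admissible.exists_of_mem_crossed {z y : (Fin d → ℤ) × ℤ} {l : List (BackStep d)}
    (h : Admissible α η ω z l) (hy : y ∈ crossed z l) :
    ∃ l', Admissible α η ω y (none :: l') ∧ l'.length < l.length := by
  induction l generalizing z with
  | nil => simp [crossed] at hy
  | cons s l ih =>
    have of_tail (hy : y ∈ crossed (backStep z s) l) :
        ∃ l', Admissible α η ω y (none :: l') ∧ l'.length < (s :: l).length :=
      let ⟨l', hl', hlt⟩ := ih h.2 hy
      ⟨l', hl', hlt.trans (Nat.lt_succ_self _)⟩
    rcases s with _ | a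
    · rcases List.mem_cons.1 hy with rfl | hy
      · exact ⟨l, h, Nat.lt_succ_self _⟩
      · exact of_tail hy
    · exact of_tail hy

theorem Admissible.closed_of_mem_crossed {z y : (Fin d → ℤ) × ℤ} {l : List (BackStep d)}
    (h : Admissible α η ω z l) (hy : y ∈ crossed z l) : ω (siteEmbedding d y) = false :=
  let ⟨_, hl', _⟩ := h.exists_of_mem_crossed hy
  hl'.1 rfl

theorem Admissible.nodup_crossed {z : (Fin d → ℤ) × ℤ} {l : List (BackStep d)}
    (h : Admissible α η ω z l) (hmin : ∀ l', Admissible α η ω z l' → l.length ≤ l'.length) :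
    (crossed z l).Nodup := by
  induction l generalizing z with
  | nil => exact List.nodup_nil
  | cons s l ih =>
    have htail : (crossed (backStep z s) l).Nodup :=
      ih h.2 fun l' hl' => Nat.le_of_succ_le_succ (hmin (s :: l') ⟨h.1, hl'⟩)
    rcases s with _ | a
    · refine List.nodup_cons.2 ⟨fun hz => ?_, htail⟩
      obtain ⟨l', hl', hlt⟩ := h.2.exists_of_mem_crossed hz
      exact absurd (hmin _ hl') (by simpa using hlt)
    · exact htail

theorem Reachable.exists_nodup {z : (Fin d → ℤ) × ℤ} (h : Reachable α η ω z) :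
    ∃ l, Admissible α η ω z l ∧ (crossed z l).Nodup := by
  classical
  have hlength : ∃ n, ∃ l, Admissible α η ω z l ∧ l.length = n :=
    let ⟨l, hl⟩ := h
    ⟨_, l, hl, rfl⟩
  obtain ⟨l, hl, hn⟩ := Nat.find_spec hlength
  exact ⟨l, hl, hl.nodup_crossed fun l' hl' => hn ▸ Nat.find_min' hlength ⟨l', hl', rfl⟩⟩

theorem reachable_planeHt (x : Fin d → ℤ) : Reachable α η ω (x, planeHt α η x) :=
  ⟨[], rfl⟩

theorem Reachable.add_single {x : Fin d → ℤ} {g : ℤ} (h : Reachable α η ω (x, g)) (i : Fin d)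
    (ε : ℤˣ) : Reachable α η ω (x + Pi.single i (ε : ℤ), g - 1) := by
  obtain ⟨l, hl⟩ := h
  refine ⟨some (i, -ε) :: l, nofun, ?_⟩
  simpa [backStep, add_assoc, ← Pi.single_add] using hl

theorem Reachable.of_sum_abs_sub_eq_one {x y : Fin d → ℤ} {g : ℤ} (h : Reachable α η ω (x, g))
    (hxy : ∑ i, |x i - y i| = 1) : Reachable α η ω (y, g - 1) := by
  obtain ⟨i, ε, rfl⟩ := exists_eq_add_single_of_sum_abs_sub_eq_one
    (by simpa only [abs_sub_comm] using hxy : ∑ i, |y i - x i| = 1)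
  exact h.add_single i ε

theorem Reachable.succ_of_closed {x : Fin d → ℤ} {g : ℤ} (h : Reachable α η ω (x, g))
    (hclosed : ω (siteEmbedding d (x, g + 1)) = false) : Reachable α η ω (x, g + 1) := by
  obtain ⟨l, hl⟩ := h
  exact ⟨none :: l, fun _ => hclosed, by simpa [backStep] using hl⟩

theorem bddAbove_reachableHeights_add_single {x : Fin d → ℤ}
    (hx : BddAbove (reachableHeights α η ω x)) (i : Fin d) (ε : ℤˣ) :
    BddAbove (reachableHeights α η ω (x + Pi.single i (ε : ℤ))) := by
  obtain ⟨B, hB⟩ := hx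
  refine ⟨B + 1, fun g hg => ?_⟩
  have hback : Reachable α η ω (x, g - 1) := by
    simpa [add_assoc, ← Pi.single_add] using Reachable.add_single hg i (-ε)
  have := hB hback
  omega

theorem bddAbove_reachableHeights_add (v : Fin d → ℤ) {x : Fin d → ℤ}
    (hx : BddAbove (reachableHeights α η ω x)) : BddAbove (reachableHeights α η ω (x + v)) := by
  induction v using Pi.single_induction generalizing x with
  | zero => rwa [add_zero]
  | add v w hv hw => simpa only [add_assoc] using hw (hv hx)
  | single i n =>
    induction n using Int.induction_on with
    | zero => simpa using hx
    | succ n ih =>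
      rw [Pi.single_add, ← add_assoc]
      exact bddAbove_reachableHeights_add_single ih i 1
    | pred n ih =>
      rw [sub_eq_add_neg, Pi.single_add, ← add_assoc]
      exact bddAbove_reachableHeights_add_single ih i (-1)

theorem mem_LIP_of_bddAbove_reachableHeights (h₀ : BddAbove (reachableHeights α η ω 0)) :
    ω ∈ LIP α η := by
  have hbdd (x : Fin d → ℤ) : BddAbove (reachableHeights α η ω x) := by
    simpa using bddAbove_reachableHeights_add x h₀
  have htop (x : Fin d → ℤ) : Reachable α η ω (x, sSup (reachableHeights α η ω x)) :=
    Int.csSup_mem ⟨_, reachable_planeHt x⟩ (hbdd x)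
  have hstep (x y : Fin d → ℤ) (hxy : ∑ i, |x i - y i| = 1) :
      sSup (reachableHeights α η ω x) - 1 ≤ sSup (reachableHeights α η ω y) :=
    le_csSup (hbdd y) ((htop x).of_sum_abs_sub_eq_one hxy)
  refine ⟨fun x => sSup (reachableHeights α η ω x) + 1, fun x y hxy => ?_, fun x => ⟨?_, ?_⟩⟩
  · have hle := hstep x y hxy
    have hge := hstep y x (by simpa only [abs_sub_comm] using hxy)
    rw [abs_le]
    constructor <;> linarith
  · by_contra hclosed
    have := le_csSup (hbdd x) ((htop x).succ_of_closed (Bool.eq_false_iff.2 hclosed))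
    omega
  · exact Int.lt_add_one_of_le (le_csSup (hbdd x) (reachable_planeHt x))

end AdmissiblePaths

section FirstMoment

variable {d : ℕ} {α q θ : ℝ} {η : Fin d → ℤ}

/-- The real-valued height of `z` above the tilted hyperplane `h = α ∑ᵢ ηᵢ xᵢ`. -/
noncomputable def excess (α : ℝ) (η : Fin d → ℤ) (z : (Fin d → ℤ) × ℤ) : ℝ :=
  z.2 - α * ∑ i, (η i : ℝ) * (z.1 i : ℝ)

/-- The weight of a backward step in the path count exponentially tilted by `θ ^ excess`, where
each closed site costs `q`. -/
noncomputable def stepWeight (α q θ : ℝ) (η : Fin d → ℤ) : BackStep d → ℝ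
  | none => q * θ
  | some (i, ε) => θ ^ (α * (η i * (ε : ℤ)) - 1 : ℝ)

theorem excess_backStep_none (z : (Fin d → ℤ) × ℤ) :
    excess α η (backStep z none) = excess α η z - 1 := by
  simp only [excess, backStep, Int.cast_sub, Int.cast_one]
  ring

theorem excess_backStep_some (z : (Fin d → ℤ) × ℤ) (i : Fin d) (ε : ℤˣ) :
    excess α η (backStep z (some (i, ε))) = excess α η z - (α * (η i * (ε : ℤ)) - 1) := by
  have hsum : ∑ j, (η j : ℝ) * ((Pi.single i (ε : ℤ) : Fin d → ℤ) j : ℝ) = η i * (ε : ℤ) := by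
    simp [Pi.single_apply]
  simp only [excess, backStep, Pi.add_apply, Int.cast_add, Int.cast_one, mul_add,
    Finset.sum_add_distrib, hsum]
  ring

theorem excess_nonpos_of_eq_planeHt {z : (Fin d → ℤ) × ℤ} (hz : z.2 = planeHt α η z.1) :
    excess α η z ≤ 0 := by
  rw [excess, hz, sub_nonpos]
  exact Int.floor_le _

theorem stepWeight_nonneg (hq : 0 ≤ q) (hθ : 0 ≤ θ) (s : BackStep d) :
    0 ≤ stepWeight α q θ η s := by
  rcases s with _ | ⟨i, ε⟩ <;> simp only [stepWeight] <;> positivity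

theorem Admissible.pow_length_crossed_le (hq : 0 ≤ q) (hθ : 1 ≤ θ) {ω : Config d}
    {z : (Fin d → ℤ) × ℤ} {l : List (BackStep d)} (h : Admissible α η ω z l) :
    q ^ (crossed z l).length ≤ θ ^ (-excess α η z) * (l.map (stepWeight α q θ η)).prod := by
  have hθ₀ : 0 < θ := by linarith
  induction l generalizing z with
  | nil =>
    simpa [crossed] using Real.one_le_rpow hθ (neg_nonneg.2 (excess_nonpos_of_eq_planeHt h))
  | cons s l ih =>
    have htail := ih h.2
    rw [List.map_cons, List.prod_cons, ← mul_assoc]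
    rcases s with _ | ⟨i, ε⟩
    · rw [excess_backStep_none, neg_sub, sub_eq_neg_add, Real.rpow_add hθ₀, Real.rpow_one] at htail
      rw [crossed, List.length_cons, pow_succ', stepWeight]
      exact (mul_le_mul_of_nonneg_left htail hq).trans_eq (by ring)
    · rw [excess_backStep_some, neg_sub, sub_eq_neg_add, Real.rpow_add hθ₀] at htail
      exact htail

variable {P : Measure (Config d)}

theorem measure_admissible_le (hq : 0 ≤ q) (hθ : 1 ≤ θ) (hP : IsBernoulli (1 - q) P)
    (z : (Fin d → ℤ) × ℤ) (l : List (BackStep d)) :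
    P {ω | Admissible α η ω z l ∧ (crossed z l).Nodup} ≤
      ENNReal.ofReal (θ ^ (-excess α η z) * (l.map (stepWeight α q θ η)).prod) := by
  rcases Set.eq_empty_or_nonempty {ω | Admissible α η ω z l ∧ (crossed z l).Nodup} with
    hempty | ⟨ω₀, hadm, hnodup⟩
  · simp [hempty]
  calc P {ω | Admissible α η ω z l ∧ (crossed z l).Nodup}
      ≤ P {ω | ∀ y ∈ (crossed z l).toFinset, ω (siteEmbedding d y) = false} :=
        measure_mono fun ω hω y hy => hω.1.closed_of_mem_crossed (List.mem_toFinset.1 hy)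
    _ = ENNReal.ofReal (q ^ (crossed z l).length) := by
        rw [hP.measure_forall_closed hq, List.toFinset_card_of_nodup hnodup]
    _ ≤ _ := ENNReal.ofReal_le_ofReal (hadm.pow_length_crossed_le hq hθ)

theorem measure_reachable_le (hq : 0 ≤ q) (hθ : 1 ≤ θ) (hP : IsBernoulli (1 - q) P)
    (z : (Fin d → ℤ) × ℤ) :
    P {ω | Reachable α η ω z} ≤
      ENNReal.ofReal (θ ^ (-excess α η z)) *
        ∑' L : ℕ, ENNReal.ofReal (∑ s, stepWeight α q θ η s) ^ L := by
  have hnonneg := stepWeight_nonneg (α := α) (η := η) hq (zero_le_one.trans hθ)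
  have hcover : {ω | Reachable α η ω z} ⊆ ⋃ (L : ℕ) (w : Fin L → BackStep d),
      {ω | Admissible α η ω z (List.ofFn w) ∧ (crossed z (List.ofFn w)).Nodup} := by
    intro ω hω
    obtain ⟨l, hl⟩ := Reachable.exists_nodup hω
    exact Set.mem_iUnion₂.2 ⟨l.length, l.get, by rwa [List.ofFn_get]⟩
  rw [← ENNReal.tsum_mul_left]
  refine (measure_mono hcover).trans <| (measure_iUnion_le _).trans <|
    ENNReal.tsum_le_tsum fun L => ?_
  calc P (⋃ w : Fin L → BackStep d,
        {ω | Admissible α η ω z (List.ofFn w) ∧ (crossed z (List.ofFn w)).Nodup})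
      ≤ ∑ w : Fin L → BackStep d,
          ENNReal.ofReal (θ ^ (-excess α η z) * ∏ i, stepWeight α q θ η (w i)) :=
        (measure_iUnion_fintype_le _ _).trans <| Finset.sum_le_sum fun w _ => by
          simpa [List.map_ofFn, List.prod_ofFn] using
            measure_admissible_le hq hθ hP z (List.ofFn w)
    _ = _ := by
        rw [← ENNReal.ofReal_sum_of_nonneg fun w _ =>
            mul_nonneg (by positivity) (Finset.prod_nonneg fun i _ => hnonneg _),
          ← Finset.mul_sum, ENNReal.ofReal_mul (by positivity), ← Fintype.sum_pow,
          ENNReal.ofReal_pow (Finset.sum_nonneg fun s _ => hnonneg s)]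

theorem tsum_measure_reachable_ne_top (hq : 0 ≤ q) (hθ : 1 < θ) (hP : IsBernoulli (1 - q) P)
    (hweight : ∑ s, stepWeight α q θ η s < 1) :
    ∑' g : ℕ, P {ω | Reachable α η ω (0, (g : ℤ))} ≠ ⊤ := by
  have hθ₀ : 0 < θ := by linarith
  have hinv {r : ℝ} (hr : r < 1) : (1 - ENNReal.ofReal r)⁻¹ ≠ ⊤ :=
    ENNReal.inv_ne_top.2 (tsub_pos_of_lt (ENNReal.ofReal_lt_one.2 hr)).ne'
  have hheight (g : ℕ) : ENNReal.ofReal (θ ^ (-excess α η (0, (g : ℤ)))) =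
      ENNReal.ofReal θ⁻¹ ^ g := by
    rw [← ENNReal.ofReal_pow (by positivity)]
    simp [excess, Real.rpow_neg hθ₀.le]
  refine ne_top_of_le_ne_top ?_
    (ENNReal.tsum_le_tsum fun g : ℕ => measure_reachable_le hq hθ.le hP (0, (g : ℤ)))
  simp only [hheight, ENNReal.tsum_mul_right, ENNReal.tsum_geometric]
  exact ENNReal.mul_ne_top (hinv (inv_lt_one_of_one_lt₀ hθ)) (hinv hweight)

theorem ae_mem_LIP (hq : 0 ≤ q) (hθ : 1 < θ) (hP : IsBernoulli (1 - q) P)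
    (hweight : ∑ s, stepWeight α q θ η s < 1) : ∀ᵐ ω ∂P, ω ∈ LIP α η := by
  filter_upwards [ae_eventually_notMem (tsum_measure_reachable_ne_top hq hθ hP hweight)] with ω hω
  refine mem_LIP_of_bddAbove_reachableHeights ?_
  obtain ⟨B, hB⟩ := eventually_atTop.1 hω
  refine ⟨B, fun g hg => ?_⟩
  by_contra! hlt
  lift g to ℕ using by omega
  exact hB g (by omega) hg

theorem IsCriticalProb.le_one_sub {P : ℝ → Measure (Config d)} {pc : ℝ}
    (hpc : IsCriticalProb P α η pc) (hq : 0 ≤ q) (hθ : 1 < θ)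
    (hP : IsBernoulli (1 - q) (P (1 - q))) (hweight : ∑ s, stepWeight α q θ η s < 1) :
    pc ≤ 1 - q := by
  have hdown : q * θ < 1 :=
    (Finset.single_le_sum (f := stepWeight α q θ η)
      (fun s _ => stepWeight_nonneg hq (by linarith) s) (Finset.mem_univ none)).trans_lt hweight
  by_contra! hlt
  have := hP.1
  have hnever : ∀ᵐ ω ∂P (1 - q), ω ∉ LIP α η :=
    measure_eq_zero_iff_ae_notMem.1 (hpc.2.1 (1 - q) (by nlinarith) hlt)
  obtain ⟨ω, hmem, hnotMem⟩ := ((ae_mem_LIP hq hθ hP hweight).and hnever).exists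
  exact hnotMem hmem

theorem sum_stepWeight_le (hη : IsSign η) (hα : 0 ≤ α) (hθ : 1 ≤ θ) :
    ∑ s, stepWeight α q θ η s ≤
      q * θ + 2 * d / θ + 2 * (∑ i, (|η i| : ℝ)) * θ ^ (α - 1) := by
  have hstep (i : Fin d) (ε : ℤˣ) :
      stepWeight α q θ η (some (i, ε)) ≤ θ⁻¹ + |(η i : ℝ)| * θ ^ (α - 1) := by
    have hinv : 0 ≤ θ⁻¹ := by positivity
    rw [stepWeight]
    rcases hη i with h | h | h <;> rcases Int.units_eq_one_or ε with rfl | rfl <;>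
      simp only [h, Units.val_one, Units.val_neg, Int.cast_neg, Int.cast_one, Int.cast_zero,
        abs_neg, abs_one, abs_zero, mul_neg, mul_one, one_mul, mul_zero, zero_mul, neg_neg,
        neg_zero, zero_sub, add_zero, Real.rpow_neg_one, le_refl] <;>
      exact le_add_of_nonneg_of_le hinv (Real.rpow_le_rpow_of_exponent_le hθ (by linarith))
  rw [Fintype.sum_option, Fintype.sum_prod_type, add_assoc]
  refine add_le_add le_rfl <|
    (Finset.sum_le_sum fun i _ => Finset.sum_le_sum fun ε _ => hstep i ε).trans_eq ?_
  simp only [Finset.sum_const, Finset.card_univ, Fintype.card_units_int, Finset.sum_add_distrib,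
    Fintype.card_fin, nsmul_eq_mul, ← Finset.mul_sum, ← Finset.sum_mul]
  push_cast
  ring

theorem isSign_etaK (d k : ℕ) : IsSign (etaK d k) := fun i => by
  by_cases h : (i : ℕ) < k <;> simp [etaK, h]

theorem sum_abs_etaK_le (d k : ℕ) : ∑ i, |(etaK d k i : ℝ)| ≤ k := by
  have hind (i : Fin d) : |(etaK d k i : ℝ)| = if (i : ℕ) < k then 1 else 0 := by
    by_cases h : (i : ℕ) < k <;> simp [etaK, h]
  have hcard : (Finset.univ.filter fun i : Fin d => (i : ℕ) < k).card ≤ (Finset.range k).card :=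
    Finset.card_le_card_of_injOn Fin.val (fun i hi => by simpa using hi) Fin.val_injective.injOn
  simp only [hind, Finset.sum_boole]
  exact_mod_cast hcard.trans_eq (Finset.card_range k)

end FirstMoment

section ModeBound

/-- An upper bound for the largest multinomial probability with `n` trials and `D` equally
likely outcomes. It is attained: the `j`-th factor is the size-biasing ratio at the mode. -/
noncomputable def modeBound (D n : ℕ) : ℝ :=
  ∏ j ∈ Finset.range n, ((j : ℝ) + 1) / (D * ((j / D : ℕ) + 1))

theorem modeBound_succ (D n : ℕ) :
    modeBound D (n + 1) = modeBound D n * (((n : ℝ) + 1) / (D * ((n / D : ℕ) + 1))) :=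
  Finset.prod_range_succ _ _

theorem modeBound_nonneg (D n : ℕ) : 0 ≤ modeBound D n :=
  Finset.prod_nonneg fun _ _ => by positivity

theorem modeBound_antitone {D : ℕ} (hD : 0 < D) : Antitone (modeBound D) := by
  refine antitone_nat_of_succ_le fun n => ?_
  rw [modeBound_succ]
  refine mul_le_of_le_one_right (modeBound_nonneg _ _) ?_
  rw [div_le_one (by positivity)]
  exact_mod_cast Nat.lt_mul_div_succ n hD

theorem modeBound_add_le_mul_pow {D k m : ℕ} (a : ℕ) (h : 2 * (k + m) ≤ D) :
    modeBound D (a * D + k + m) ≤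
      modeBound D (a * D + k) * ((2 * a + 1) / (2 * a + 2) : ℝ) ^ m := by
  induction m with
  | zero => simp
  | succ m ih =>
    have hdiv : (a * D + k + m) / D = a := by
      rw [add_assoc, mul_comm, Nat.mul_add_div (by omega), Nat.div_eq_of_lt (by omega), add_zero]
    have hD : (0 : ℝ) < D := by exact_mod_cast (by omega : 0 < D)
    have hfactor : (((a * D + k + m : ℕ) : ℝ) + 1) / (D * (a + 1)) ≤ (2 * a + 1) / (2 * a + 2) := by
      have hreal : (2 * (k + (m + 1)) : ℝ) ≤ D := by exact_mod_cast h
      rw [div_le_div_iff₀ (by positivity) (by positivity)]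
      push_cast
      nlinarith [mul_le_mul_of_nonneg_left hreal (by positivity : (0 : ℝ) ≤ a + 1)]
    rw [← add_assoc, modeBound_succ, hdiv, pow_succ, ← mul_assoc]
    exact mul_le_mul (ih (by omega)) hfactor (by positivity)
      (mul_nonneg (modeBound_nonneg _ _) (by positivity))

theorem modeBound_one (D : ℕ) : modeBound D 1 = 1 / D := by
  simp [modeBound]

theorem modeBound_two {D : ℕ} (hD : 2 ≤ D) : modeBound D 2 = 2 / (D : ℝ) ^ 2 := by
  rw [modeBound_succ, modeBound_one, Nat.div_eq_of_lt (by omega), div_mul_div_comm]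
  norm_num [sq]

theorem modeBound_mul_add_two_le {D : ℕ} (hD : 12 ≤ D) (a : ℕ) :
    modeBound D (a * D + 2) ≤ 2 / ((D : ℝ) * (a + 1)) ^ 2 := by
  induction a with
  | zero => simp [modeBound_two (by omega : 2 ≤ D)]
  | succ a ih =>
    have hratio : ((2 * a + 1) / (2 * a + 2) : ℝ) ^ 2 ≤ (a + 1) / (a + 2) := by
      rw [div_pow, div_le_div_iff₀ (by positivity) (by positivity)]
      nlinarith [(Nat.cast_nonneg a : (0 : ℝ) ≤ a)]
    calc modeBound D ((a + 1) * D + 2)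
        ≤ modeBound D (a * D + 2 + 4) :=
          modeBound_antitone (by omega) (by rw [add_one_mul]; omega)
      _ ≤ modeBound D (a * D + 2) * (((2 * a + 1) / (2 * a + 2) : ℝ) ^ 2) ^ 2 := by
          rw [← pow_mul]
          exact modeBound_add_le_mul_pow a (by omega)
      _ ≤ 2 / ((D : ℝ) * (a + 1)) ^ 2 * ((a + 1) / (a + 2)) ^ 2 := by
          gcongr
      _ = 2 / ((D : ℝ) * ((a + 1 : ℕ) + 1)) ^ 2 := by
          push_cast
          field_simp
          ring

theorem modeBound_add_two_le {D : ℕ} (hD : 12 ≤ D) (k : ℕ) :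
    modeBound D (k + 2) ≤ 8 * (((k + D : ℕ) : ℝ) ^ 2)⁻¹ := by
  have hlt : k < D * (k / D + 1) := Nat.lt_mul_div_succ k (by omega)
  have hle : k + D ≤ 2 * (D * (k / D + 1)) := by
    have := Nat.le_mul_of_pos_right D (Nat.add_one_pos (k / D))
    omega
  calc modeBound D (k + 2)
      ≤ modeBound D (k / D * D + 2) :=
        modeBound_antitone (by omega) (Nat.add_le_add_right (Nat.div_mul_le_self k D) 2)
    _ ≤ 2 / ((D : ℝ) * ((k / D : ℕ) + 1)) ^ 2 := modeBound_mul_add_two_le hD _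
    _ = 8 / (2 * ((D : ℝ) * ((k / D : ℕ) + 1))) ^ 2 := by
        field_simp
        norm_num
    _ ≤ 8 / ((k + D : ℕ) : ℝ) ^ 2 := by
        gcongr
        exact_mod_cast hle
    _ = _ := div_eq_mul_inv _ _

theorem sum_modeBound_succ_le {D : ℕ} (hD : 12 ≤ D) (N : ℕ) :
    ∑ n ∈ Finset.range N, modeBound D (n + 1) ≤ 17 / D := by
  have htail (N : ℕ) : ∑ k ∈ Finset.range N, (((k + D : ℕ) : ℝ) ^ 2)⁻¹ ≤ 2 / D :=
    calc ∑ k ∈ Finset.range N, (((k + D : ℕ) : ℝ) ^ 2)⁻¹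
        = ∑ i ∈ Finset.Ioo (D - 1) (N + D), ((i : ℝ) ^ 2)⁻¹ := by
          rw [Finset.range_eq_Ico, Finset.sum_Ico_add' fun i : ℕ => ((i : ℝ) ^ 2)⁻¹]
          congr 1
          ext i
          simp only [Finset.mem_Ico, Finset.mem_Ioo]
          omega
      _ ≤ 2 / ((D - 1 : ℕ) + 1) := sum_Ioo_inv_sq_le _ _
      _ = 2 / D := by
          rw [Nat.cast_sub (by omega), Nat.cast_one, sub_add_cancel]
  cases N with
  | zero =>
    rw [Finset.sum_range_zero]
    positivity
  | succ N =>
    rw [Finset.sum_range_succ', zero_add, modeBound_one]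
    calc ∑ k ∈ Finset.range N, modeBound D (k + 2) + 1 / D
        ≤ 8 * (2 / D) + 1 / D := by
          refine add_le_add_left ?_ _
          refine (Finset.sum_le_sum fun k _ => modeBound_add_two_le hD k).trans ?_
          rw [← Finset.mul_sum]
          exact mul_le_mul_of_nonneg_left (htail N) (by norm_num)
      _ = 17 / D := by ring

end ModeBound

section OrientedWalk

variable {S : Type*} [Fintype S]

theorem exists_div_card_lt_of_sum_eq [Nonempty S] {n : ℕ} {x : S → ℤ}
    (hx : ∑ s, x s = (n + 1 : ℕ)) : ∃ s, ((n / Fintype.card S : ℕ) : ℤ) < x s := by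
  have hlt : ∑ _s : S, ((n / Fintype.card S : ℕ) : ℤ) < ∑ s, x s := by
    rw [hx, Finset.sum_const, Finset.card_univ, nsmul_eq_mul]
    exact_mod_cast Nat.lt_succ_of_le (Nat.mul_div_le n (Fintype.card S))
  obtain ⟨s, -, hs⟩ := Finset.exists_lt_of_sum_lt hlt
  exact ⟨s, hs⟩

variable [DecidableEq S]

/-- The operator averaging a function on `ℤ^S` over the translates of a point by `ε` times a
uniformly chosen unit vector. -/
noncomputable def shiftAvg (ε : ℤ) : Module.End ℝ ((S → ℤ) → ℝ) where
  toFun f x := (∑ s, f (x + Pi.single s ε)) / Fintype.card S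
  map_add' f g := by
    ext x
    simp [Finset.sum_add_distrib, add_div]
  map_smul' c f := by
    ext x
    simp [← Finset.mul_sum, mul_div_assoc]

/-- The law at time `n` of the uniform oriented walk on `ℤ^S` started at the origin. -/
noncomputable def walkProb (n : ℕ) : (S → ℤ) → ℝ := (shiftAvg (-1) ^ n) (Pi.single 0 1)

/-- The generator of the difference of two independent uniform oriented walks. -/
noncomputable def meetStep : Module.End ℝ ((S → ℤ) → ℝ) := shiftAvg 1 * shiftAvg (-1)

/-- The probability that two independent uniform oriented walks with initial difference `z`
meet at time `n`, as a function of `z`. -/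
noncomputable def meetProb (n : ℕ) : (S → ℤ) → ℝ := (meetStep ^ n) (Pi.single 0 1)

theorem shiftAvg_apply (ε : ℤ) (f : (S → ℤ) → ℝ) (x : S → ℤ) :
    shiftAvg ε f x = (∑ s, f (x + Pi.single s ε)) / Fintype.card S := rfl

theorem commute_shiftAvg (ε δ : ℤ) : Commute (shiftAvg (S := S) ε) (shiftAvg δ) := by
  ext f x
  simp only [Module.End.mul_apply, shiftAvg_apply, ← Finset.sum_div]
  rw [Finset.sum_comm]
  simp only [add_right_comm]

theorem shiftAvg_mono (ε : ℤ) : Monotone (shiftAvg (S := S) ε) := fun _ _ h _ =>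
  div_le_div_of_nonneg_right (Finset.sum_le_sum fun _ _ => h _) (Nat.cast_nonneg _)

theorem shiftAvg_const [Nonempty S] (ε : ℤ) (c : ℝ) :
    shiftAvg (S := S) ε (Function.const _ c) = Function.const _ c := by
  ext x
  simp [shiftAvg_apply]

theorem sum_add_single (x : S → ℤ) (s : S) (ε : ℤ) :
    ∑ r, (x + Pi.single s ε : S → ℤ) r = ∑ r, x r + ε := by
  simp [Finset.sum_add_distrib]

theorem walkProb_succ (n : ℕ) : walkProb (S := S) (n + 1) = shiftAvg (-1) (walkProb n) := by
  rw [walkProb, pow_succ', Module.End.mul_apply, ← walkProb]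

theorem walkProb_nonneg (n : ℕ) : 0 ≤ walkProb (S := S) n := by
  induction n with
  | zero => exact Pi.single_nonneg.2 zero_le_one
  | succ n ih =>
    rw [walkProb_succ, ← map_zero (shiftAvg (-1))]
    exact shiftAvg_mono (-1) ih

theorem walkProb_eq_zero {n : ℕ} {x : S → ℤ} (h : ∑ s, x s ≠ n) : walkProb n x = 0 := by
  induction n generalizing x with
  | zero =>
    have hx : x ≠ 0 := by
      rintro rfl
      simp at h
    exact Pi.single_eq_of_ne hx 1
  | succ n ih =>
    rw [walkProb_succ, shiftAvg_apply, Finset.sum_eq_zero fun s _ => ih _, zero_div]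
    intro s
    rw [sum_add_single]
    push_cast at h
    omega

/-- Size-biasing for the multinomial distribution, which is the law of the oriented walk. -/
theorem coord_mul_walkProb (n : ℕ) (x : S → ℤ) (s : S) :
    (x s : ℝ) * walkProb n x =
      n / Fintype.card S * walkProb (n - 1) (x + Pi.single s (-1)) := by
  induction n generalizing x with
  | zero =>
    by_cases h : x = 0 <;> simp [walkProb, h]
  | succ n ih =>
    set y := x + Pi.single s (-1) with hy
    have hterm (r : S) : (x s : ℝ) * walkProb n (x + Pi.single r (-1)) =
        n / Fintype.card S * walkProb (n - 1) (y + Pi.single r (-1)) +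
          if r = s then walkProb n y else 0 := by
      rw [hy, add_right_comm, ← ih]
      by_cases hrs : r = s
      · subst hrs
        simp only [Pi.add_apply, Pi.single_eq_same, Int.cast_add, Int.cast_neg, Int.cast_one,
          if_true]
        ring
      · simp [hrs]
    have hmain : (n : ℝ) / Fintype.card S * ∑ r, walkProb (n - 1) (y + Pi.single r (-1)) =
        n * walkProb n y := by
      cases n with
      | zero => simp
      | succ n =>
        rw [walkProb_succ n, shiftAvg_apply, Nat.add_sub_cancel]
        ring
    calc (x s : ℝ) * walkProb (n + 1) x
        = (∑ r, (x s : ℝ) * walkProb n (x + Pi.single r (-1))) / Fintype.card S := by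
          rw [walkProb_succ, shiftAvg_apply, mul_div_assoc', Finset.mul_sum]
      _ = (n * walkProb n y + walkProb n y) / Fintype.card S := by
          simp only [hterm, Finset.sum_add_distrib, ← Finset.mul_sum, hmain, Finset.sum_ite_eq',
            Finset.mem_univ, if_true]
      _ = (n + 1 : ℕ) / Fintype.card S * walkProb (n + 1 - 1) y := by
          rw [Nat.add_sub_cancel]
          push_cast
          ring

theorem walkProb_le_modeBound [Nonempty S] (n : ℕ) (x : S → ℤ) :
    walkProb n x ≤ modeBound (Fintype.card S) n := by
  induction n generalizing x with
  | zero =>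
    by_cases hx : x = 0 <;> simp [walkProb, modeBound, hx]
  | succ n ih =>
    by_cases hx : ∑ s, x s = (n + 1 : ℕ)
    swap
    · exact (walkProb_eq_zero hx).trans_le (modeBound_nonneg _ _)
    obtain ⟨s, hs⟩ := exists_div_card_lt_of_sum_eq hx
    have hs' : ((n / Fintype.card S : ℕ) : ℝ) + 1 ≤ x s := by
      simpa only [Int.cast_add, Int.cast_natCast, Int.cast_one] using
        (Int.cast_le (R := ℝ)).2 (Int.add_one_le_of_lt hs)
    have hcoord : (((n / Fintype.card S : ℕ) : ℝ) + 1) * walkProb (n + 1) x ≤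
        ((n : ℝ) + 1) / Fintype.card S * modeBound (Fintype.card S) n :=
      calc (((n / Fintype.card S : ℕ) : ℝ) + 1) * walkProb (n + 1) x
          ≤ x s * walkProb (n + 1) x := mul_le_mul_of_nonneg_right hs' (walkProb_nonneg _ _)
        _ = ((n : ℝ) + 1) / Fintype.card S * walkProb n (x + Pi.single s (-1)) := by
            rw [coord_mul_walkProb, Nat.add_sub_cancel, Nat.cast_succ]
        _ ≤ _ := mul_le_mul_of_nonneg_left (ih _) (by positivity)
    rw [mul_comm, ← le_div_iff₀ (by positivity)] at hcoord
    refine hcoord.trans_eq ?_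
    rw [modeBound_succ]
    field_simp

theorem meetProb_succ (n : ℕ) : meetProb (S := S) (n + 1) = meetStep (meetProb n) := by
  rw [meetProb, pow_succ', Module.End.mul_apply, ← meetProb]

theorem meetProb_eq_shiftAvg_pow (n : ℕ) :
    meetProb (S := S) n = (shiftAvg 1 ^ n) (walkProb n) := by
  rw [meetProb, meetStep, (commute_shiftAvg _ _).mul_pow, Module.End.mul_apply, ← walkProb]

theorem meetProb_le_modeBound [Nonempty S] (n : ℕ) (z : S → ℤ) :
    meetProb n z ≤ modeBound (Fintype.card S) n := by
  have hshift (k : ℕ) (z : S → ℤ) :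
      (shiftAvg 1 ^ k) (walkProb n) z ≤ modeBound (Fintype.card S) n := by
    induction k generalizing z with
    | zero => exact walkProb_le_modeBound n z
    | succ k ih =>
      rw [pow_succ', Module.End.mul_apply]
      exact (shiftAvg_mono 1 ih z).trans_eq (congrFun (shiftAvg_const 1 _) z)
  rw [meetProb_eq_shiftAvg_pow]
  exact hshift n z

end OrientedWalk

section PathPairs

variable {S : Type*} [Fintype S]

theorem sum_ofFn_succ {R : Type*} [AddCommMonoid R] (N : ℕ) (f : List S → R) :
    ∑ w : Fin (N + 1) → S, f (List.ofFn w) = ∑ s, ∑ w : Fin N → S, f (s :: List.ofFn w) := by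
  rw [← (Fin.consEquiv fun _ => S).sum_comp, Fintype.sum_prod_type]
  simp [Fin.consEquiv, List.ofFn_succ]

variable [DecidableEq S]

/-- The sites visited, before the last step, by the oriented path with steps `l` from `x`. -/
def visited : (S → ℤ) → List S → Finset (S → ℤ)
  | _, [] => ∅
  | x, s :: l => insert x (visited (x + Pi.single s 1) l)

/-- The sum over all pairs of `N`-step oriented paths from `x` and `y` of the probability that every
site visited by either of them is closed, where sites are closed with probability `q`. -/
noncomputable def pairSum (q : ℝ) (N : ℕ) (x y : S → ℤ) : ℝ :=
  ∑ w : Fin N → S, ∑ w' : Fin N → S,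
    q ^ (visited x (List.ofFn w) ∪ visited y (List.ofFn w')).card

/-- `1` plus `c` times the expected number of meetings up to time `N` of two oriented walks, as a
function of their initial difference. It controls `pairSum`. -/
noncomputable def meetBound (c : ℝ) (N : ℕ) : (S → ℤ) → ℝ :=
  1 + c • ∑ n ∈ Finset.range N, meetProb (n + 1)

theorem sum_le_of_mem_visited {x y : S → ℤ} {l : List S} (h : y ∈ visited x l) :
    ∑ s, x s ≤ ∑ s, y s := by
  induction l generalizing x with
  | nil => simp [visited] at h
  | cons s l ih =>
    rcases Finset.mem_insert.1 h with rfl | h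
    · exact le_rfl
    · have hle := ih h
      rw [sum_add_single] at hle
      omega

theorem notMem_visited_add_single {x y : S → ℤ} (hxy : ∑ r, y r = ∑ r, x r) (s : S)
    (l : List S) : y ∉ visited (x + Pi.single s 1) l := fun h => by
  have hle := sum_le_of_mem_visited h
  rw [sum_add_single] at hle
  omega

theorem card_visited (x : S → ℤ) (l : List S) : (visited x l).card = l.length := by
  induction l generalizing x with
  | nil => rfl
  | cons s l ih =>
    rw [visited, Finset.card_insert_of_notMem (notMem_visited_add_single rfl s l), ih,
      List.length_cons]

theorem card_visited_cons_union_cons {x y : S → ℤ} (hxy : ∑ s, x s = ∑ s, y s) (s t : S)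
    (l m : List S) : (visited x (s :: l) ∪ visited y (t :: m)).card =
      (if x = y then 1 else 2) +
        (visited (x + Pi.single s 1) l ∪ visited (y + Pi.single t 1) m).card := by
  have hnotMem (z : S → ℤ) (hz : ∑ s, z s = ∑ s, x s) :
      z ∉ visited (x + Pi.single s 1) l ∪ visited (y + Pi.single t 1) m :=
    Finset.notMem_union.2
      ⟨notMem_visited_add_single hz s l, notMem_visited_add_single (hz.trans hxy) t m⟩
  have hunion : visited x (s :: l) ∪ visited y (t :: m) =
      insert x (insert y (visited (x + Pi.single s 1) l ∪ visited (y + Pi.single t 1) m)) := by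
    rw [visited, visited, Finset.insert_union, Finset.union_insert]
  rw [hunion]
  split_ifs with h
  · subst h
    rw [Finset.insert_idem, Finset.card_insert_of_notMem (hnotMem _ rfl), add_comm]
  · rw [Finset.card_insert_of_notMem, Finset.card_insert_of_notMem (hnotMem _ hxy.symm)]
    · omega
    · exact fun hmem => (Finset.mem_insert.1 hmem).elim h (hnotMem _ rfl)

theorem pairSum_succ (q : ℝ) (N : ℕ) {x y : S → ℤ} (hxy : ∑ s, x s = ∑ s, y s) :
    pairSum q (N + 1) x y = q ^ (if x = y then 1 else 2) *
      ∑ s, ∑ t, pairSum q N (x + Pi.single s 1) (y + Pi.single t 1) := by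
  have hinner (l : List S) :
      ∑ w' : Fin (N + 1) → S, q ^ (visited x l ∪ visited y (List.ofFn w')).card =
        ∑ t, ∑ w' : Fin N → S, q ^ (visited x l ∪ visited y (t :: List.ofFn w')).card :=
    sum_ofFn_succ N fun l' => q ^ (visited x l ∪ visited y l').card
  have houter := sum_ofFn_succ N fun l => ∑ w' : Fin (N + 1) → S,
    q ^ (visited x l ∪ visited y (List.ofFn w')).card
  rw [pairSum, houter]
  simp only [pairSum, hinner, card_visited_cons_union_cons hxy, pow_add, Finset.mul_sum]
  exact Finset.sum_congr rfl fun s _ => Finset.sum_comm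

theorem meetStep_apply (f : (S → ℤ) → ℝ) (z : S → ℤ) :
    meetStep f z =
      (∑ s, ∑ t, f (z + Pi.single s 1 + Pi.single t (-1))) / (Fintype.card S : ℝ) ^ 2 := by
  simp only [meetStep, Module.End.mul_apply, shiftAvg_apply, ← Finset.sum_div, div_div, sq]

theorem meetStep_one [Nonempty S] : meetStep (1 : (S → ℤ) → ℝ) = 1 := by
  have hone (ε : ℤ) : shiftAvg ε (1 : (S → ℤ) → ℝ) = 1 := shiftAvg_const ε 1
  rw [meetStep, Module.End.mul_apply, hone, hone]

theorem meetBound_succ [Nonempty S] (c : ℝ) (N : ℕ) :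
    meetBound (S := S) c (N + 1) = meetStep (meetBound c N + c • Pi.single 0 1) := by
  have hzero : meetStep (Pi.single 0 1) = meetProb (S := S) 1 := (meetProb_succ 0).symm
  simp only [meetBound, map_add, map_smul, map_sum, meetStep_one, ← meetProb_succ, hzero,
    Finset.sum_range_succ', zero_add, smul_add, add_assoc]

theorem ite_mul_meetBound_le {q c : ℝ} {N : ℕ} (hc : (q⁻¹ - 1) * meetBound (S := S) c N 0 ≤ c)
    (z : S → ℤ) :
    (if z = 0 then q⁻¹ else 1) * meetBound c N z ≤
      (meetBound c N + c • Pi.single 0 1 : (S → ℤ) → ℝ) z := by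
  split_ifs with hz
  · subst hz
    simp only [Pi.add_apply, Pi.smul_apply, Pi.single_eq_same, smul_eq_mul, mul_one]
    linarith
  · simp [hz]

theorem pairSum_le [Nonempty S] {q c : ℝ} (hq : 0 < q) (hq₁ : q ≤ 1)
    (hc : ∀ N, (q⁻¹ - 1) * meetBound (S := S) c N 0 ≤ c) (N : ℕ) {x y : S → ℤ}
    (hxy : ∑ s, x s = ∑ s, y s) :
    pairSum q N x y ≤ (q * Fintype.card S) ^ (2 * N) *
      ((if x - y = 0 then q⁻¹ else 1) * meetBound c N (x - y)) := by
  induction N generalizing x y with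
  | zero =>
    have hone : (1 : ℝ) ≤ if x - y = 0 then q⁻¹ else 1 := by
      split_ifs
      exacts [(one_le_inv₀ hq).2 hq₁, le_rfl]
    simpa [pairSum, visited, meetBound] using hone
  | succ N ih =>
    set b : (S → ℤ) → ℝ := meetBound c N + c • Pi.single 0 1
    have hstep (s t : S) : pairSum q N (x + Pi.single s 1) (y + Pi.single t 1) ≤
        (q * Fintype.card S) ^ (2 * N) * b (x - y + Pi.single s 1 + Pi.single t (-1)) := by
      have hdiff : x + Pi.single s 1 - (y + Pi.single t 1) =
          x - y + Pi.single s 1 + Pi.single t (-1) := by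
        rw [Pi.single_neg]
        abel
      rw [← hdiff]
      exact (ih (by simp only [sum_add_single, hxy])).trans
        (mul_le_mul_of_nonneg_left (ite_mul_meetBound_le (hc N) _) (by positivity))
    have hpow : q ^ (if x = y then 1 else 2) = q ^ 2 * if x - y = 0 then q⁻¹ else 1 := by
      simp only [sub_eq_zero]
      split_ifs
      · field_simp
      · rw [mul_one]
    calc pairSum q (N + 1) x y
        = q ^ (if x = y then 1 else 2) *
            ∑ s, ∑ t, pairSum q N (x + Pi.single s 1) (y + Pi.single t 1) := pairSum_succ q N hxy
      _ ≤ q ^ (if x = y then 1 else 2) * ∑ s, ∑ t, (q * Fintype.card S) ^ (2 * N) *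
            b (x - y + Pi.single s 1 + Pi.single t (-1)) := by
          gcongr
          exact hstep _ _
      _ = _ := by
          rw [meetBound_succ, meetStep_apply, hpow]
          simp only [← Finset.mul_sum]
          field_simp
          ring

theorem pairSum_self_le [Nonempty S] {q : ℝ} (hq : 0 < q) (hq₁ : q ≤ 1)
    (hqS : 34 ≤ q * Fintype.card S) (N : ℕ) (x : S → ℤ) :
    pairSum q N x x ≤ (q * Fintype.card S) ^ (2 * N) * (2 * q⁻¹) := by
  have hcard : (34 : ℝ) ≤ Fintype.card S :=
    hqS.trans (mul_le_of_le_one_left (Nat.cast_nonneg _) hq₁)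
  have hmeet (N : ℕ) : meetBound (S := S) (2 * q⁻¹) N 0 ≤ 2 := by
    have hsum : ∑ n ∈ Finset.range N, meetProb (S := S) (n + 1) 0 ≤ 17 / Fintype.card S :=
      (Finset.sum_le_sum fun n _ => meetProb_le_modeBound (n + 1) 0).trans
        (sum_modeBound_succ_le (by exact_mod_cast (by norm_num : (12 : ℝ) ≤ 34).trans hcard) N)
    have hratio : 2 * q⁻¹ * (17 / Fintype.card S) ≤ 1 := by
      rw [← div_eq_mul_inv, div_mul_div_comm, div_le_one (by positivity)]
      linarith
    have hmul := mul_le_mul_of_nonneg_left hsum (by positivity : 0 ≤ 2 * q⁻¹)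
    simp only [meetBound, Pi.add_apply, Pi.one_apply, Pi.smul_apply, Finset.sum_apply, smul_eq_mul]
    linarith
  have hinv : 1 ≤ q⁻¹ := (one_le_inv₀ hq).2 hq₁
  have hc (N : ℕ) : (q⁻¹ - 1) * meetBound (S := S) (2 * q⁻¹) N 0 ≤ 2 * q⁻¹ := by
    nlinarith [hmeet N]
  refine (pairSum_le hq hq₁ hc N rfl).trans ?_
  rw [sub_self, if_pos rfl, mul_comm 2 q⁻¹]
  have := hmeet N
  gcongr
  rwa [mul_comm]

end PathPairs

section SecondMoment

variable {Ω κ : Type*} [MeasurableSpace Ω] {P : Measure Ω} [IsFiniteMeasure P]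

theorem integrable_indicator_one {A : Set Ω} (hA : MeasurableSet A) :
    Integrable (A.indicator (1 : Ω → ℝ)) P :=
  (integrable_const (1 : ℝ)).indicator hA

theorem integrable_sum_indicator_one {E : κ → Set Ω} (hE : ∀ w, MeasurableSet (E w))
    (G : Finset κ) : Integrable (fun ω => ∑ w ∈ G, (E w).indicator (1 : Ω → ℝ) ω) P :=
  integrable_finsetSum _ fun w _ => integrable_indicator_one (hE w)

theorem integral_sum_indicator_one {E : κ → Set Ω} (hE : ∀ w, MeasurableSet (E w))
    (G : Finset κ) :
    ∫ ω, ∑ w ∈ G, (E w).indicator (1 : Ω → ℝ) ω ∂P = ∑ w ∈ G, P.real (E w) := by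
  rw [integral_finsetSum _ fun w _ => integrable_indicator_one (hE w)]
  exact Finset.sum_congr rfl fun w _ => integral_indicator_one (hE w)

theorem sq_sum_measureReal_le_measureReal_biUnion_mul {E : κ → Set Ω}
    (hE : ∀ w, MeasurableSet (E w)) (G : Finset κ) :
    (∑ w ∈ G, P.real (E w)) ^ 2 ≤
      P.real (⋃ w ∈ G, E w) * ∑ w ∈ G, ∑ w' ∈ G, P.real (E w ∩ E w') := by
  set A := ⋃ w ∈ G, E w
  set X : Ω → ℝ := fun ω => ∑ w ∈ G, (E w).indicator (1 : Ω → ℝ) ω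
  set Y : Ω → ℝ := fun ω => ∑ p ∈ G ×ˢ G, (E p.1 ∩ E p.2).indicator (1 : Ω → ℝ) ω
  have hA : MeasurableSet A := G.measurableSet_biUnion fun w _ => hE w
  have hE₂ (p : κ × κ) : MeasurableSet (E p.1 ∩ E p.2) := (hE p.1).inter (hE p.2)
  have hXint : Integrable X P := integrable_sum_indicator_one hE G
  have hYint : Integrable Y P := integrable_sum_indicator_one hE₂ _
  have hXsq (ω : Ω) : Y ω = X ω * X ω := by
    simp only [X, Y, Finset.sum_mul_sum, Finset.sum_product, Set.inter_indicator_one, Pi.mul_apply]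
  have hsquare (t : ℝ) (ω : Ω) :
      (X ω - t * A.indicator 1 ω) ^ 2 = Y ω - 2 * t * X ω + t * t * A.indicator 1 ω := by
    rw [hXsq]
    by_cases hω : ω ∈ A
    · rw [Set.indicator_of_mem hω, Pi.one_apply]
      ring
    · have hXzero : X ω = 0 := Finset.sum_eq_zero fun w hw =>
        Set.indicator_of_notMem (fun h => hω (Set.mem_biUnion hw h)) _
      rw [Set.indicator_of_notMem hω, hXzero]
      ring
  have hquadratic (t : ℝ) : 0 ≤ P.real A * (t * t) + (-2 * ∑ w ∈ G, P.real (E w)) * t +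
      ∑ w ∈ G, ∑ w' ∈ G, P.real (E w ∩ E w') :=
    calc 0 ≤ ∫ ω, (X ω - t * A.indicator 1 ω) ^ 2 ∂P := integral_nonneg fun ω => sq_nonneg _
      _ = ∫ ω, Y ω ∂P - 2 * t * ∫ ω, X ω ∂P + t * t * ∫ ω, A.indicator 1 ω ∂P := by
        simp only [hsquare]
        have hYX : Integrable (fun ω => Y ω - 2 * t * X ω) P := hYint.sub (hXint.const_mul _)
        rw [integral_add hYX ((integrable_indicator_one hA).const_mul _),
          integral_sub hYint (hXint.const_mul _), integral_const_mul, integral_const_mul]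
      _ = _ := by
        rw [integral_sum_indicator_one hE, integral_sum_indicator_one hE₂,
          integral_indicator_one hA, Finset.sum_product]
        ring
  have hdiscrim := discrim_le_zero hquadratic
  rw [discrim] at hdiscrim
  linarith

end SecondMoment

theorem IsBernoulli.le_measureReal_biUnion_closed_path {S ι : Type*} [Fintype S] [DecidableEq S]
    [Nonempty S] {q κ : ℝ} {P : Measure (ι → Bool)} (hP : IsBernoulli (1 - q) P) (hq : 0 < q)
    (hq₁ : q ≤ 1) (hqS : 34 ≤ q * Fintype.card S) (σ : (S → ℤ) ↪ ι) {N : ℕ} {G : Finset (Fin N → S)}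
    (hκ : 0 < κ) (hG : (Fintype.card S : ℝ) ^ N ≤ κ * G.card) :
    q / (2 * κ ^ 2) ≤
      P.real (⋃ w ∈ G, {ω | ∀ x ∈ visited 0 (List.ofFn w), ω (σ x) = false}) := by
  have := hP.1
  set E : (Fin N → S) → Set (ι → Bool) :=
    fun w => {ω | ∀ x ∈ visited 0 (List.ofFn w), ω (σ x) = false}
  set M : ℝ := (q * Fintype.card S) ^ N
  have hM : 0 < M := by positivity
  have hfirst : ∑ w ∈ G, P.real (E w) = G.card * q ^ N := by
    simp only [E, hP.measureReal_forall_closed hq.le, card_visited, List.length_ofFn,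
      Finset.sum_const, nsmul_eq_mul]
  have hsecond : ∑ w ∈ G, ∑ w' ∈ G, P.real (E w ∩ E w') ≤ M ^ 2 * (2 * q⁻¹) := by
    simp only [E, hP.measureReal_forall_closed_inter hq.le]
    calc ∑ w ∈ G, ∑ w' ∈ G, q ^ (visited 0 (List.ofFn w) ∪ visited 0 (List.ofFn w')).card
        ≤ pairSum q N 0 0 :=
          (Finset.sum_le_sum fun w _ => Finset.sum_le_univ_sum_of_nonneg fun _ => by
            positivity).trans (Finset.sum_le_univ_sum_of_nonneg fun _ => by positivity)
      _ ≤ M ^ 2 * (2 * q⁻¹) := by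
          rw [← pow_mul, mul_comm N 2]
          exact pairSum_self_le hq hq₁ hqS N 0
  have hmany : M ≤ κ * (G.card * q ^ N) := by
    have hmul := mul_le_mul_of_nonneg_right hG (by positivity : 0 ≤ q ^ N)
    simp only [M, mul_pow]
    linarith
  have hmoment : (G.card * q ^ N) ^ 2 ≤ P.real (⋃ w ∈ G, E w) * (M ^ 2 * (2 * q⁻¹)) := by
    rw [← hfirst]
    exact (sq_sum_measureReal_le_measureReal_biUnion_mul
      (fun w => measurableSet_forall_closed σ (visited 0 (List.ofFn w))) G).trans
        (mul_le_mul_of_nonneg_left hsecond measureReal_nonneg)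
  refine le_of_mul_le_mul_right ?_ (by positivity : 0 < M ^ 2 * (2 * q⁻¹))
  refine le_trans ?_ hmoment
  rw [show q / (2 * κ ^ 2) * (M ^ 2 * (2 * q⁻¹)) = M ^ 2 / κ ^ 2 by field_simp,
    div_le_iff₀ (by positivity), mul_comm, ← mul_pow]
  gcongr

section LetterCounts

variable {S : Type*} [Fintype S] [BEq S] [LawfulBEq S]

theorem sum_count_eq_length (l : List S) : ∑ a, l.count a = l.length := by
  classical
  induction l with
  | nil => simp
  | cons b l ih => simp [List.count_cons, Finset.sum_add_distrib, ih]

theorem exists_le_count_ofFn [Nonempty S] {g : ℕ} (w : Fin (Fintype.card S * g) → S) :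
    ∃ a, g ≤ (List.ofFn w).count a := by
  obtain ⟨a, -, ha⟩ := Finset.exists_le_of_sum_le (s := Finset.univ) (f := fun _ : S => g)
    (g := fun a => (List.ofFn w).count a) Finset.univ_nonempty (by simp [sum_count_eq_length])
  exact ⟨a, ha⟩

theorem card_filter_le_count_ofFn (N g : ℕ) (a b : S) :
    (Finset.univ.filter fun w : Fin N → S => g ≤ (List.ofFn w).count b).card =
      (Finset.univ.filter fun w : Fin N → S => g ≤ (List.ofFn w).count a).card := by
  classical
  refine Finset.card_equiv (Equiv.arrowCongr (Equiv.refl _) (Equiv.swap a b)) fun w => ?_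
  have hcount : (List.ofFn (Equiv.swap a b ∘ w)).count a = (List.ofFn w).count b := by
    rw [← List.map_ofFn, ← List.count_map_of_injective _ _ (Equiv.swap a b).injective b,
      Equiv.swap_apply_right]
  rw [Finset.mem_filter_univ, Finset.mem_filter_univ, ← hcount]
  rfl

theorem card_pow_le_card_mul_card_filter_le_count (a : S) (g : ℕ) :
    Fintype.card S ^ (Fintype.card S * g) ≤ Fintype.card S *
      (Finset.univ.filter fun w : Fin (Fintype.card S * g) → S =>
        g ≤ (List.ofFn w).count a).card := by
  classical
  have : Nonempty S := ⟨a⟩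
  have hcover : (Finset.univ : Finset (Fin (Fintype.card S * g) → S)) =
      Finset.univ.biUnion fun b => Finset.univ.filter fun w => g ≤ (List.ofFn w).count b := by
    ext w
    simpa using exists_le_count_ofFn w
  calc Fintype.card S ^ (Fintype.card S * g)
      = (Finset.univ : Finset (Fin (Fintype.card S * g) → S)).card := by simp
    _ ≤ _ := by
      nth_rewrite 1 [hcover]
      exact Finset.card_biUnion_le_card_mul _ _ _ fun b _ => (card_filter_le_count_ofFn _ g a b).le

end LetterCounts

section FlatDirections

variable {d : ℕ} {α : ℝ} {η : Fin d → ℤ}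

/-- The oriented walk that blocks Lipschitz surfaces has one step `some i` for each direction
`i` along which the tilted plane is flat, and the step `none`, which moves downwards. -/
abbrev FlatStep (η : Fin d → ℤ) := Option {i // η i = 0}

/-- The point of `ℤ^d` with coordinates `x (some i)` in the flat directions, and `0` in the
others. -/
def flatPoint (η : Fin d → ℤ) (x : FlatStep η → ℤ) : Fin d → ℤ :=
  fun j => if h : η j = 0 then x (some ⟨j, h⟩) else 0

/-- The point with coordinates `x` of the oriented walk, as a site; the walk starts at height
`g` above the origin. -/
def flatSite (η : Fin d → ℤ) (g : ℤ) : (FlatStep η → ℤ) ↪ Site d where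
  toFun x := siteEmbedding d (flatPoint η x, g - x none)
  inj' x y hxy := by
    obtain ⟨hpoint, hheight⟩ := Prod.ext_iff.1 ((siteEmbedding d).injective hxy)
    funext s
    rcases s with _ | ⟨i, hi⟩
    · simpa using hheight
    · simpa [flatPoint, hi] using congrFun hpoint i

theorem flatPoint_zero : flatPoint η 0 = 0 := by
  funext j
  simp [flatPoint]

theorem planeHt_flatPoint (x : FlatStep η → ℤ) : planeHt α η (flatPoint η x) = 0 := by
  have hsum : ∑ i, (η i : ℝ) * (flatPoint η x i : ℝ) = 0 :=
    Finset.sum_eq_zero fun i _ => by by_cases h : η i = 0 <;> simp [flatPoint, h]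
  simp [planeHt, hsum]

theorem flatPoint_add_single_none (x : FlatStep η → ℤ) (n : ℤ) :
    flatPoint η (x + Pi.single none n) = flatPoint η x := by
  funext j
  simp [flatPoint]

theorem flatPoint_add_single_some (x : FlatStep η → ℤ) (i : {i // η i = 0}) (n : ℤ) :
    flatPoint η (x + Pi.single (some i) n) = flatPoint η x + Pi.single i.1 n := by
  funext j
  by_cases hj : η j = 0
  · simp [flatPoint, hj, Pi.single_apply, Subtype.ext_iff]
  · have hne : j ≠ i := fun h => hj (h ▸ i.2)
    simp [flatPoint, hj, hne]

theorem IsLipschitzFn.le_add_one {F : (Fin d → ℤ) → ℤ} (hF : IsLipschitzFn F) (x : Fin d → ℤ)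
    (i : Fin d) : F (x + Pi.single i 1) ≤ F x + 1 := by
  have hdist : ∑ j, |(x + Pi.single i 1 : Fin d → ℤ) j - x j| = 1 := by
    simp [Pi.single_apply, apply_ite abs]
  have := (abs_le.1 (hF _ _ hdist)).2
  omega

-- A surface above the end of the walk, where the height is at most `0`, stays above the whole walk
-- read backwards: it cannot drop onto a closed site, and it drops by at most `1` per flat step.
theorem lt_of_closed_path {ω : Config d} {F : (Fin d → ℤ) → ℤ} (hF : IsLipschitzFn F)
    (hopen : ∀ x, ω (siteEmbedding d (x, F x)) = true) (hpos : ∀ x, 0 < F (flatPoint η x)) {g : ℤ}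
    {l : List (FlatStep η)} {x : FlatStep η → ℤ}
    (hclosed : ∀ y ∈ visited x l, ω (flatSite η g y) = false) (hg : g ≤ x none + l.count none) :
    g - x none < F (flatPoint η x) := by
  induction l generalizing x with
  | nil =>
    have := hpos x
    simp only [List.count_nil, Nat.cast_zero, add_zero] at hg
    omega
  | cons s l ih =>
    have hne : F (flatPoint η x) ≠ g - x none := fun h => by
      have hx : ω (siteEmbedding d (flatPoint η x, g - x none)) = false :=
        hclosed x (Finset.mem_insert_self _ _)
      exact absurd (h ▸ hopen (flatPoint η x)) (by simp [hx])
    have htail := @ih (x + Pi.single s 1) fun y hy => hclosed y (Finset.mem_insert_of_mem hy)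
    rcases s with _ | i
    · simp only [flatPoint_add_single_none, Pi.add_apply, Pi.single_eq_same] at htail
      simp only [List.count_cons_self, Nat.cast_add, Nat.cast_one] at hg
      have := htail (by omega)
      omega
    · simp only [flatPoint_add_single_some, Pi.add_apply, Pi.single_apply, reduceCtorEq, if_false,
        add_zero] at htail
      have := htail (by simpa using hg)
      have := hF.le_add_one (flatPoint η x) i
      omega

/-- The part of the event `LIP α η` on which some open Lipschitz surface above the tilted plane has
height at most `g` above the origin. -/
def lipBelow (α : ℝ) (η : Fin d → ℤ) (g : ℕ) : Set (Config d) :=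
  {ω | ∃ F : (Fin d → ℤ) → ℤ, IsLipschitzFn F ∧
    (∀ x, ω (siteEmbedding d (x, F x)) = true ∧ planeHt α η x < F x) ∧ F 0 ≤ g}

theorem lipBelow_mono : Monotone (lipBelow α η) :=
  fun _ _ hg _ ⟨F, hF, habove, h₀⟩ => ⟨F, hF, habove, h₀.trans (by exact_mod_cast hg)⟩

theorem iUnion_lipBelow : ⋃ g, lipBelow α η g = LIP α η := by
  ext ω
  refine Set.mem_iUnion.trans ⟨fun ⟨_, F, hF, habove, _⟩ => ⟨F, hF, habove⟩, ?_⟩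
  exact fun ⟨F, hF, habove⟩ => ⟨(F 0).toNat, F, hF, habove, Int.self_le_toNat _⟩

theorem lipBelow_subset_compl_closed_path {g : ℕ} {l : List (FlatStep η)}
    (hg : g ≤ l.count none) :
    lipBelow α η g ⊆ {ω | ∀ x ∈ visited 0 l, ω (flatSite η g x) = false}ᶜ := by
  rintro ω ⟨F, hF, habove, h₀⟩ hclosed
  have hlt := lt_of_closed_path (g := g) hF (fun x => (habove x).1)
    (fun x => planeHt_flatPoint (α := α) x ▸ (habove (flatPoint η x)).2) hclosed
    (by simpa using hg)
  rw [flatPoint_zero] at hlt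
  simp only [Pi.zero_apply, sub_zero] at hlt
  omega

theorem IsBernoulli.measure_lipBelow_le {q : ℝ} {P : Measure (Config d)}
    (hP : IsBernoulli (1 - q) P) (hq : 0 < q) (hq₁ : q ≤ 1)
    (hqη : 34 ≤ q * Fintype.card (FlatStep η)) (g : ℕ) :
    P (lipBelow α η g) ≤ ENNReal.ofReal (1 - q / (2 * Fintype.card (FlatStep η) ^ 2)) := by
  have := hP.1
  set N := Fintype.card (FlatStep η) * g
  set G := Finset.univ.filter fun w : Fin N → FlatStep η => g ≤ (List.ofFn w).count none
  set A := ⋃ w ∈ G, {ω : Config d | ∀ x ∈ visited 0 (List.ofFn w), ω (flatSite η g x) = false}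
  have hA : MeasurableSet A := G.measurableSet_biUnion fun w _ => measurableSet_forall_closed _ _
  have hG : Fintype.card (FlatStep η) ^ N ≤ Fintype.card (FlatStep η) * G.card :=
    card_pow_le_card_mul_card_filter_le_count none g
  have hPA : q / (2 * Fintype.card (FlatStep η) ^ 2) ≤ P.real A :=
    hP.le_measureReal_biUnion_closed_path hq hq₁ hqη _ (by exact_mod_cast Fintype.card_pos)
      (by exact_mod_cast hG)
  have hsub : lipBelow α η g ⊆ Aᶜ := by
    simp only [A, Set.compl_iUnion, Set.subset_iInter_iff]
    exact fun w hw => lipBelow_subset_compl_closed_path (Finset.mem_filter_univ w |>.1 hw)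
  calc P (lipBelow α η g) ≤ P Aᶜ := measure_mono hsub
    _ = ENNReal.ofReal (1 - P.real A) := by
      rw [← ofReal_measureReal, probReal_compl_eq_one_sub hA]
    _ ≤ _ := ENNReal.ofReal_le_ofReal (by linarith)

theorem IsBernoulli.measure_LIP_lt_one {q : ℝ} {P : Measure (Config d)}
    (hP : IsBernoulli (1 - q) P) (hq : 0 < q) (hq₁ : q ≤ 1)
    (hqη : 34 ≤ q * Fintype.card (FlatStep η)) : P (LIP α η) < 1 := by
  rw [← iUnion_lipBelow, lipBelow_mono.measure_iUnion]
  refine (iSup_le (hP.measure_lipBelow_le hq hq₁ hqη)).trans_lt (ENNReal.ofReal_lt_one.2 ?_)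
  exact sub_lt_self _ (by positivity)

theorem IsCriticalProb.one_sub_le {q pc : ℝ} {P : ℝ → Measure (Config d)}
    (hpc : IsCriticalProb P α η pc) (hq : 0 < q) (hq₁ : q ≤ 1)
    (hP : IsBernoulli (1 - q) (P (1 - q))) (hqη : 34 ≤ q * Fintype.card (FlatStep η)) :
    1 - q ≤ pc := by
  by_contra! hlt
  exact (hP.measure_LIP_lt_one hq hq₁ hqη).ne (hpc.2.2 _ hlt (by linarith))

theorem sub_sum_abs_le_card_flatStep (η : Fin d → ℤ) :
    d - ∑ i, |(η i : ℝ)| ≤ Fintype.card (FlatStep η) := by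
  have hone (i : Fin d) : (1 : ℝ) ≤ |(η i : ℝ)| + if η i = 0 then 1 else 0 := by
    split_ifs with h
    · simp [h]
    · rw [add_zero]
      exact_mod_cast Int.one_le_abs h
  have hsum : ∑ _i : Fin d, (1 : ℝ) ≤ ∑ i, (|(η i : ℝ)| + if η i = 0 then 1 else 0) :=
    Finset.sum_le_sum fun i _ => hone i
  simp only [Finset.sum_add_distrib, Finset.sum_boole, Finset.sum_const, Finset.card_univ,
    Fintype.card_fin, nsmul_eq_mul, mul_one] at hsum
  rw [Fintype.card_option, Fintype.card_subtype]
  push_cast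
  linarith

end FlatDirections

section CriticalValue

variable {d k : ℕ} {α pc : ℝ} {P : ℝ → Measure (Config d)}

theorem IsCriticalProb.le_mul_one_sub (hpc : IsCriticalProb P α (etaK d k) pc)
    (hP : ∀ p ∈ Set.Icc (0 : ℝ) 1, IsBernoulli p (P p)) (hα : α ∈ Set.Icc 0 1) (hd : 1 ≤ d)
    {c : ℝ} (hc : 0 ≤ c) (hck : c + k / (2 * (d : ℝ) ^ (1 - α)) < 1 / 8) : c ≤ d * (1 - pc) := by
  have hd₁ : (1 : ℝ) ≤ d := by exact_mod_cast hd
  have hd₀ : (0 : ℝ) < d := by linarith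
  have hk : 0 ≤ k / (2 * (d : ℝ) ^ (1 - α)) := by positivity
  have hq : 0 ≤ c / d := by positivity
  have hq₁ : c / d ≤ 1 := (div_le_one hd₀).2 (by linarith)
  have hpow : (4 * d : ℝ) ^ (α - 1) ≤ ((d : ℝ) ^ (1 - α))⁻¹ := by
    rw [← Real.rpow_neg hd₀.le, neg_sub]
    exact Real.rpow_le_rpow_of_nonpos hd₀ (by linarith) (by linarith [hα.2])
  have hweight : ∑ s, stepWeight α (c / d) (4 * d) (etaK d k) s < 1 :=
    calc ∑ s, stepWeight α (c / d) (4 * d) (etaK d k) s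
        ≤ c / d * (4 * d) + 2 * d / (4 * d) +
            2 * (∑ i, |(etaK d k i : ℝ)|) * (4 * d : ℝ) ^ (α - 1) :=
          sum_stepWeight_le (isSign_etaK d k) hα.1 (by linarith)
      _ ≤ c / d * (4 * d) + 2 * d / (4 * d) + 2 * k * ((d : ℝ) ^ (1 - α))⁻¹ := by
          gcongr
          exact sum_abs_etaK_le d k
      _ = 4 * (c + k / (2 * (d : ℝ) ^ (1 - α))) + 1 / 2 := by
          field_simp
          ring
      _ < 1 := by linarith
  have hle := hpc.le_one_sub hq (by linarith) (hP _ ⟨by linarith, by linarith⟩) hweight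
  rw [← div_le_iff₀' hd₀]
  linarith

theorem IsCriticalProb.mul_one_sub_le (hpc : IsCriticalProb P α (etaK d k) pc)
    (hP : ∀ p ∈ Set.Icc (0 : ℝ) 1, IsBernoulli p (P p)) (hd : 68 ≤ d) (hk : 2 * k ≤ d) :
    d * (1 - pc) ≤ 68 := by
  have hd₁ : (68 : ℝ) ≤ d := by exact_mod_cast hd
  have hd₀ : (0 : ℝ) < d := by linarith
  have hk₁ : 2 * (k : ℝ) ≤ d := by exact_mod_cast hk
  have hq₁ : 68 / (d : ℝ) ≤ 1 := (div_le_one hd₀).2 hd₁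
  have hq : 0 < 68 / (d : ℝ) := by positivity
  have hflat : d / 2 ≤ (Fintype.card (FlatStep (etaK d k)) : ℝ) := by
    linarith [sub_sum_abs_le_card_flatStep (etaK d k), sum_abs_etaK_le d k]
  have hle := hpc.one_sub_le hq hq₁ (hP _ ⟨by linarith, by linarith⟩) <|
    calc (34 : ℝ) = 68 / d * (d / 2) := by
          field_simp
          norm_num
      _ ≤ 68 / d * Fintype.card (FlatStep (etaK d k)) := by gcongr
  rw [← le_div_iff₀' hd₀]
  linarith

end CriticalValue

theorem eventually_two_mul_le_of_tendsto_div_rpow {α : ℝ} (hα : 0 ≤ α) {φ : ℕ → ℕ}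
    (hφ : Tendsto (fun d : ℕ => (φ d : ℝ) / (d : ℝ) ^ (1 - α)) atTop (nhds 0)) :
    ∀ᶠ d in atTop, 2 * φ d ≤ d := by
  filter_upwards [hφ.eventually_lt_const one_half_pos, eventually_ge_atTop 1] with d hlt hd
  have hd₁ : (1 : ℝ) ≤ d := by exact_mod_cast hd
  have hpow : (d : ℝ) ^ (1 - α) ≤ d := Real.rpow_le_self_of_one_le hd₁ (by linarith)
  rw [div_lt_iff₀ (by positivity)] at hlt
  have : 2 * (φ d : ℝ) ≤ d := by linarith
  exact_mod_cast this

/-- If `φ(d) ≤ d` and `φ(d) ∈ o(d^{1−α})` as `d → ∞`, then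
`liminf_{d→∞} d · q_L(α,d,φ(d)) ≥ 1/8`. -/
theorem qL_liminf_little_o_case
    (α : ℝ) (hα : α ∈ Set.Ico (0 : ℝ) 1)
    (φ : ℕ → ℕ) (hφ : ∀ d : ℕ, φ d ≤ d)
    (hlittleo : Tendsto (fun d : ℕ => (φ d : ℝ) / (d : ℝ) ^ (1 - α)) atTop (nhds 0))
    (P : (n : ℕ) → ℝ → Measure (Config n))
    (hP : ∀ n : ℕ, ∀ p ∈ Set.Icc (0 : ℝ) 1, IsBernoulli p (P n p))
    (pc : ℕ → ℝ) (hpc : ∀ d : ℕ, 1 ≤ d → IsCriticalProb (P d) α (etaK d (φ d)) (pc d)) :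
    (1 : ℝ) / 8 ≤ atTop.liminf fun d : ℕ => (d : ℝ) * (1 - pc d) := by
  have hbdd : IsBoundedUnder (· ≤ ·) atTop fun d : ℕ => (d : ℝ) * (1 - pc d) := by
    refine isBoundedUnder_of_eventually_le (a := 68) ?_
    filter_upwards [eventually_two_mul_le_of_tendsto_div_rpow hα.1 hlittleo,
      eventually_ge_atTop 68] with d hφd hd
    exact (hpc d (by omega)).mul_one_sub_le (hP d) hd hφd
  refine le_of_forall_lt_imp_le_of_dense fun c hc => ?_
  refine le_liminf_of_le hbdd.isCoboundedUnder_ge ?_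
  have hc₀ : max c 0 < 1 / 8 := max_lt hc (by norm_num)
  filter_upwards [hlittleo.eventually_lt_const (by linarith : 0 < 2 * (1 / 8 - max c 0)),
    eventually_ge_atTop 1] with d hφd hd
  refine (le_max_left c 0).trans ((hpc d hd).le_mul_one_sub (hP d) (Set.Ico_subset_Icc_self hα) hd
    (le_max_right c 0) ?_)
  rw [mul_comm 2, ← div_div]
  linarith
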